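/- Let Q(x,y) = x⁴ + y⁴ − 6x²y² and G(x,y) = Q(x,y) · log(x² + y²), defined for (x,y) ∈ ℝ² \ {(0,0)}, and for δ, η > 0 let u = δ ∇⊥(ΔG) + η (y, 0) on B₁ \ {0}, where ∇⊥f = (∂_y f, −∂_x f). Then there exist δ₀ > 0 and η₀ > 0 such that for all 0 < δ ≤ δ₀ and 0 < η ≤ η₀, the Jacobian matrix satisfies sup_{0 < x² + y² < 1} ‖∇u(x,y)‖ ≤ 1, where ‖·‖ is the operator norm of a 2×2 real matrix. -/

import Mathlib

/-!
Since `Q` is harmonic and homogeneous of degree `4`, and `log (x² + y²)` is harmonic off the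
origin, the product rule for the Laplacian together with Euler's identity gives
`ΔG = 2 ∇Q · ∇log (x² + y²) = 16 Q / (x² + y²)` (`lap_G`). This is homogeneous of degree `2`, the
logarithm having disappeared, so its second derivatives are homogeneous of degree `0` and hence
bounded off the origin. Explicitly, with `s = x² + y²`, one has `Q = s² - 8x²y²`, and the second
derivatives of `16 Q / s` are a constant plus multiples of monomials of degree `2k` divided by
`s ^ k`, each of absolute value at most `1`. For `δ ≤ 1/10000` and `η ≤ 1/10` every entry of `∇u`
is at most `1/2` in absolute value, so its Frobenius norm, and with it its operator norm, is at
most `1`.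
-/

/-- Partial derivative in the first variable. -/
noncomputable def pdx (f : ℝ → ℝ → ℝ) (x y : ℝ) : ℝ := deriv (fun t => f t y) x

/-- Partial derivative in the second variable. -/
noncomputable def pdy (f : ℝ → ℝ → ℝ) (x y : ℝ) : ℝ := deriv (fun t => f x t) y

/-- The Laplacian `Δf = ∂²f/∂x² + ∂²f/∂y²`. -/
noncomputable def lap (f : ℝ → ℝ → ℝ) (x y : ℝ) : ℝ :=
  pdx (pdx f) x y + pdy (pdy f) x y

/-- The polynomial `Q(x,y) = x⁴ + y⁴ − 6 x² y²`. -/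
def Q (x y : ℝ) : ℝ := x ^ 4 + y ^ 4 - 6 * x ^ 2 * y ^ 2

/-- `G(x,y) = Q(x,y) log(x² + y²)`. -/
noncomputable def G (x y : ℝ) : ℝ := Q x y * Real.log (x ^ 2 + y ^ 2)

/-- First component of `u = δ ∇⊥(ΔG) + η (y, 0)`, where `∇⊥ f = (∂_y f, −∂_x f)`. -/
noncomputable def u₁ (δ η : ℝ) (x y : ℝ) : ℝ := δ * pdy (lap G) x y + η * y

/-- Second component of `u = δ ∇⊥(ΔG) + η (y, 0)`. -/
noncomputable def u₂ (δ : ℝ) (x y : ℝ) : ℝ := -(δ * pdx (lap G) x y)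

/-- The Jacobian matrix `∇u = (∂ⱼ uᵢ)` of `u = δ ∇⊥(ΔG) + η (y, 0)`. -/
noncomputable def gradU (δ η : ℝ) (x y : ℝ) : Matrix (Fin 2) (Fin 2) ℝ :=
  !![pdx (u₁ δ η) x y, pdy (u₁ δ η) x y;
     pdx (u₂ δ) x y,   pdy (u₂ δ) x y]

lemma pdx_congr {f g : ℝ → ℝ → ℝ}
    (h : ∀ x y : ℝ, 0 < x ^ 2 + y ^ 2 → f x y = g x y) {x y : ℝ} (hs : 0 < x ^ 2 + y ^ 2) :
    pdx f x y = pdx g x y := by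
  have hc : ContinuousAt (fun t : ℝ => t ^ 2 + y ^ 2) x := by fun_prop
  exact Filter.EventuallyEq.deriv_eq
    ((hc.eventually (lt_mem_nhds hs)).mono fun t ht => h t y ht)

lemma pdy_congr {f g : ℝ → ℝ → ℝ}
    (h : ∀ x y : ℝ, 0 < x ^ 2 + y ^ 2 → f x y = g x y) {x y : ℝ} (hs : 0 < x ^ 2 + y ^ 2) :
    pdy f x y = pdy g x y := by
  have hc : ContinuousAt (fun t : ℝ => x ^ 2 + t ^ 2) y := by fun_prop
  exact Filter.EventuallyEq.deriv_eq
    ((hc.eventually (lt_mem_nhds hs)).mono fun t ht => h x t ht)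

lemma hasDerivAt_sx (x y : ℝ) : HasDerivAt (fun t : ℝ => t ^ 2 + y ^ 2) (2 * x) x := by
  simpa using (hasDerivAt_pow 2 x).add_const (y ^ 2)

lemma hasDerivAt_sy (x y : ℝ) : HasDerivAt (fun t : ℝ => x ^ 2 + t ^ 2) (2 * y) y := by
  simpa using (hasDerivAt_pow 2 y).const_add (x ^ 2)

lemma hasDerivAt_Qx (x y : ℝ) :
    HasDerivAt (fun t => Q t y) (4 * x ^ 3 - 12 * x * y ^ 2) x := by
  refine ((((hasDerivAt_pow 4 x).add_const (y ^ 4)).sub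
    (((hasDerivAt_pow 2 x).const_mul 6).mul_const (y ^ 2)))).congr_deriv ?_
  push_cast
  ring

lemma hasDerivAt_Qy (x y : ℝ) :
    HasDerivAt (fun t => Q x t) (4 * y ^ 3 - 12 * x ^ 2 * y) y := by
  refine ((((hasDerivAt_pow 4 y).const_add (x ^ 4)).sub
    ((hasDerivAt_pow 2 y).const_mul (6 * x ^ 2)))).congr_deriv ?_
  push_cast
  ring

lemma pdx_G (x y : ℝ) (hs : 0 < x ^ 2 + y ^ 2) :
    pdx G x y = (4 * x ^ 3 - 12 * x * y ^ 2) * Real.log (x ^ 2 + y ^ 2)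
      + Q x y * (2 * x / (x ^ 2 + y ^ 2)) := by
  have hQ := hasDerivAt_Qx x y
  exact (hQ.mul ((hasDerivAt_sx x y).log hs.ne')).deriv

lemma pdy_G (x y : ℝ) (hs : 0 < x ^ 2 + y ^ 2) :
    pdy G x y = (4 * y ^ 3 - 12 * x ^ 2 * y) * Real.log (x ^ 2 + y ^ 2)
      + Q x y * (2 * y / (x ^ 2 + y ^ 2)) := by
  have hQ := hasDerivAt_Qy x y
  exact (hQ.mul ((hasDerivAt_sy x y).log hs.ne')).deriv

lemma pdx_pdx_G (x y : ℝ) (hs : 0 < x ^ 2 + y ^ 2) :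
    pdx (pdx G) x y = (12 * x ^ 2 - 12 * y ^ 2) * Real.log (x ^ 2 + y ^ 2)
      + 2 * (4 * x ^ 3 - 12 * x * y ^ 2) * (2 * x / (x ^ 2 + y ^ 2))
      + Q x y * (2 * (y ^ 2 - x ^ 2) / (x ^ 2 + y ^ 2) ^ 2) := by
  rw [pdx_congr pdx_G hs]
  have hQ := hasDerivAt_Qx x y
  have hQ' : HasDerivAt (fun t : ℝ => 4 * t ^ 3 - 12 * t * y ^ 2)
      (12 * x ^ 2 - 12 * y ^ 2) x := by
    refine (((hasDerivAt_pow 3 x).const_mul 4).sub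
      (((hasDerivAt_id x).const_mul 12).mul_const (y ^ 2))).congr_deriv ?_
    push_cast
    ring
  have h2 : HasDerivAt (fun t : ℝ => 2 * t) 2 x := by
    simpa using (hasDerivAt_id x).const_mul 2
  refine ((hQ'.mul ((hasDerivAt_sx x y).log hs.ne')).add
    (hQ.mul (h2.div (hasDerivAt_sx x y) hs.ne'))).deriv.trans ?_
  have := hs.ne'
  simp only [Pi.div_apply]
  field_simp
  ring

lemma pdy_pdy_G (x y : ℝ) (hs : 0 < x ^ 2 + y ^ 2) :
    pdy (pdy G) x y = (12 * y ^ 2 - 12 * x ^ 2) * Real.log (x ^ 2 + y ^ 2)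
      + 2 * (4 * y ^ 3 - 12 * x ^ 2 * y) * (2 * y / (x ^ 2 + y ^ 2))
      + Q x y * (2 * (x ^ 2 - y ^ 2) / (x ^ 2 + y ^ 2) ^ 2) := by
  rw [pdy_congr pdy_G hs]
  have hQ := hasDerivAt_Qy x y
  have hQ' : HasDerivAt (fun t : ℝ => 4 * t ^ 3 - 12 * x ^ 2 * t)
      (12 * y ^ 2 - 12 * x ^ 2) y := by
    refine (((hasDerivAt_pow 3 y).const_mul 4).sub
      ((hasDerivAt_id y).const_mul (12 * x ^ 2))).congr_deriv ?_
    push_cast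
    ring
  have h2 : HasDerivAt (fun t : ℝ => 2 * t) 2 y := by
    simpa using (hasDerivAt_id y).const_mul 2
  refine ((hQ'.mul ((hasDerivAt_sy x y).log hs.ne')).add
    (hQ.mul (h2.div (hasDerivAt_sy x y) hs.ne'))).deriv.trans ?_
  have := hs.ne'
  simp only [Pi.div_apply]
  field_simp
  ring

/-- `ΔG = 16 Q / (x² + y²)`: the logarithmic terms cancel because `Q` is harmonic. -/
lemma lap_G (x y : ℝ) (hs : 0 < x ^ 2 + y ^ 2) :
    lap G x y = 16 * Q x y / (x ^ 2 + y ^ 2) := by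
  have := hs.ne'
  rw [lap, pdx_pdx_G x y hs, pdy_pdy_G x y hs, Q]
  field_simp
  ring

lemma pdx_lap_G (x y : ℝ) (hs : 0 < x ^ 2 + y ^ 2) :
    pdx (lap G) x y = 32 * x - 256 * (x * y ^ 4) / (x ^ 2 + y ^ 2) ^ 2 := by
  rw [pdx_congr lap_G hs]
  have hQ := hasDerivAt_Qx x y
  refine ((hQ.const_mul 16).div (hasDerivAt_sx x y) hs.ne').deriv.trans ?_
  have := hs.ne'
  rw [Q]
  field_simp
  ring

lemma pdy_lap_G (x y : ℝ) (hs : 0 < x ^ 2 + y ^ 2) :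
    pdy (lap G) x y = 32 * y - 256 * (x ^ 4 * y) / (x ^ 2 + y ^ 2) ^ 2 := by
  rw [pdy_congr lap_G hs]
  have hQ := hasDerivAt_Qy x y
  refine ((hQ.const_mul 16).div (hasDerivAt_sy x y) hs.ne').deriv.trans ?_
  have := hs.ne'
  rw [Q]
  field_simp
  ring

lemma pdx_u₁ (δ η x y : ℝ) (hs : 0 < x ^ 2 + y ^ 2) :
    pdx (u₁ δ η) x y = δ * (-1024 * (x ^ 3 * y ^ 3 / (x ^ 2 + y ^ 2) ^ 3)) := by
  rw [pdx_congr (g := fun x y =>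
    δ * (32 * y - 256 * (x ^ 4 * y) / (x ^ 2 + y ^ 2) ^ 2) + η * y)
    (fun x y h => by rw [u₁, pdy_lap_G x y h]) hs]
  have h := (((((((hasDerivAt_pow 4 x).mul_const y).const_mul 256).div
    ((hasDerivAt_sx x y).pow 2) (pow_ne_zero 2 hs.ne')).const_sub (32 * y)).const_mul
    δ).add_const (η * y)).deriv
  refine h.trans ?_
  have := hs.ne'
  simp only [Pi.div_apply, Pi.pow_apply, id, Nat.cast_ofNat]
  field_simp
  ring

lemma pdy_u₁ (δ η x y : ℝ) (hs : 0 < x ^ 2 + y ^ 2) :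
    pdy (u₁ δ η) x y = δ * (32 - 256 * (x ^ 4 / (x ^ 2 + y ^ 2) ^ 2)
      + 1024 * (x ^ 4 * y ^ 2 / (x ^ 2 + y ^ 2) ^ 3)) + η := by
  rw [pdy_congr (g := fun x y =>
    δ * (32 * y - 256 * (x ^ 4 * y) / (x ^ 2 + y ^ 2) ^ 2) + η * y)
    (fun x y h => by rw [u₁, pdy_lap_G x y h]) hs]
  have h := (((((hasDerivAt_id y).const_mul 32).sub
    ((((hasDerivAt_id y).const_mul (x ^ 4)).const_mul 256).div
    ((hasDerivAt_sy x y).pow 2) (pow_ne_zero 2 hs.ne'))).const_mul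
    δ).add ((hasDerivAt_id y).const_mul η)).deriv
  refine h.trans ?_
  have := hs.ne'
  simp only [Pi.div_apply, Pi.pow_apply, id, Nat.cast_ofNat]
  field_simp
  ring

lemma pdx_u₂ (δ x y : ℝ) (hs : 0 < x ^ 2 + y ^ 2) :
    pdx (u₂ δ) x y = -(δ * (32 - 256 * (y ^ 4 / (x ^ 2 + y ^ 2) ^ 2)
      + 1024 * (x ^ 2 * y ^ 4 / (x ^ 2 + y ^ 2) ^ 3))) := by
  rw [pdx_congr (g := fun x y =>
    -(δ * (32 * x - 256 * (x * y ^ 4) / (x ^ 2 + y ^ 2) ^ 2)))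
    (fun x y h => by rw [u₂, pdx_lap_G x y h]) hs]
  have h := (((((hasDerivAt_id x).const_mul 32).sub
    ((((hasDerivAt_id x).mul_const (y ^ 4)).const_mul 256).div
    ((hasDerivAt_sx x y).pow 2) (pow_ne_zero 2 hs.ne'))).const_mul
    δ).neg).deriv
  refine h.trans ?_
  have := hs.ne'
  simp only [Pi.div_apply, Pi.pow_apply, id, Nat.cast_ofNat]
  field_simp
  ring

lemma pdy_u₂ (δ x y : ℝ) (hs : 0 < x ^ 2 + y ^ 2) :
    pdy (u₂ δ) x y = δ * (1024 * (x ^ 3 * y ^ 3 / (x ^ 2 + y ^ 2) ^ 3)) := by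
  rw [pdy_congr (g := fun x y =>
    -(δ * (32 * x - 256 * (x * y ^ 4) / (x ^ 2 + y ^ 2) ^ 2)))
    (fun x y h => by rw [u₂, pdx_lap_G x y h]) hs]
  have h := ((((((hasDerivAt_pow 4 y).const_mul x).const_mul 256).div
    ((hasDerivAt_sy x y).pow 2) (pow_ne_zero 2 hs.ne')).const_sub (32 * x)).const_mul
    δ).neg.deriv
  refine h.trans ?_
  have := hs.ne'
  simp only [Pi.div_apply, Pi.pow_apply, id, Nat.cast_ofNat]
  field_simp
  ring

/-- A monomial of degree `2k` is bounded by `(x² + y²) ^ k`. -/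
lemma abs_monomial_div_le_one (x y : ℝ) (hs : 0 < x ^ 2 + y ^ 2) (a b k : ℕ)
    (h : a + b = 2 * k) : |x ^ a * y ^ b / (x ^ 2 + y ^ 2) ^ k| ≤ 1 := by
  have hr : √(x ^ 2 + y ^ 2) ^ (2 * k) = (x ^ 2 + y ^ 2) ^ k := by
    rw [pow_mul, Real.sq_sqrt hs.le]
  have hx : |x| ≤ √(x ^ 2 + y ^ 2) := Real.abs_le_sqrt (by nlinarith [sq_nonneg y])
  have hy : |y| ≤ √(x ^ 2 + y ^ 2) := Real.abs_le_sqrt (by nlinarith [sq_nonneg x])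
  rw [abs_div, abs_of_pos (pow_pos hs k), div_le_one (pow_pos hs k), abs_mul, abs_pow, abs_pow,
    ← hr, ← h, pow_add]
  gcongr

/-- A `2 × 2` matrix with entries at most `1/2` in absolute value has Frobenius norm, hence
operator norm, at most `1`. -/
lemma opNorm_le_one_of_entries (a b c d : ℝ) (ha : |a| ≤ 1 / 2) (hb : |b| ≤ 1 / 2)
    (hc : |c| ≤ 1 / 2) (hd : |d| ≤ 1 / 2) :
    ‖Matrix.toEuclideanCLM (𝕜 := ℝ) !![a, b; c, d]‖ ≤ 1 := by
  refine ContinuousLinearMap.opNorm_le_bound _ zero_le_one fun v => ?_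
  rw [one_mul, EuclideanSpace.norm_eq, EuclideanSpace.norm_eq]
  apply Real.sqrt_le_sqrt
  simp only [Matrix.ofLp_toEuclideanCLM, Fin.sum_univ_two, Real.norm_eq_abs, sq_abs]
  simp [Matrix.mulVec, dotProduct, Fin.sum_univ_two]
  generalize v.ofLp 0 = p
  generalize v.ofLp 1 = q
  have sq : ∀ t : ℝ, |t| ≤ 1 / 2 → t ^ 2 ≤ 1 / 4 := fun t ht => by
    have := (sq_le_sq₀ (abs_nonneg t) (by norm_num)).2 ht
    rw [sq_abs] at this
    linarith
  have hsum : a ^ 2 + b ^ 2 + c ^ 2 + d ^ 2 ≤ 1 := by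
    linarith [sq a ha, sq b hb, sq c hc, sq d hd]
  -- Cauchy–Schwarz for each row, in the form of Lagrange's identity
  nlinarith [sq_nonneg (a * q - b * p), sq_nonneg (c * q - d * p),
    mul_le_mul_of_nonneg_right hsum (add_nonneg (sq_nonneg p) (sq_nonneg q))]

/-- For `δ, η` small enough, the operator norm of the Jacobian matrix of
`u = δ ∇⊥(ΔG) + η (y,0)` is at most `1` on the punctured unit ball. -/
theorem grad_u_small :
    ∃ δ₀ > (0 : ℝ), ∃ η₀ > (0 : ℝ),
      ∀ δ η : ℝ, 0 < δ → δ ≤ δ₀ → 0 < η → η ≤ η₀ →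
        ∀ x y : ℝ, 0 < x ^ 2 + y ^ 2 → x ^ 2 + y ^ 2 < 1 →
          ‖Matrix.toEuclideanCLM (𝕜 := ℝ) (gradU δ η x y)‖ ≤ 1 := by
  refine ⟨1 / 10000, by norm_num, 1 / 10, by norm_num, ?_⟩
  intro δ η hδ hδ₀ hη hη₀ x y hs _
  rw [gradU, pdx_u₁ δ η x y hs, pdy_u₁ δ η x y hs, pdx_u₂ δ x y hs, pdy_u₂ δ x y hs]
  have h33 := abs_le.1 (abs_monomial_div_le_one x y hs 3 3 3 rfl)
  have h42 := abs_le.1 (abs_monomial_div_le_one x y hs 4 2 3 rfl)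
  have h24 := abs_le.1 (abs_monomial_div_le_one x y hs 2 4 3 rfl)
  have h40 := abs_le.1 (abs_monomial_div_le_one x y hs 4 0 2 rfl)
  have h04 := abs_le.1 (abs_monomial_div_le_one x y hs 0 4 2 rfl)
  rw [pow_zero, mul_one] at h40
  rw [pow_zero, one_mul] at h04
  -- every second derivative of `ΔG` is at most `32 + 256 + 1024 ≤ 2000` in absolute value
  have small : ∀ t : ℝ, -2000 ≤ t → t ≤ 2000 → |δ * t| ≤ 1 / 5 := fun t h1 h2 => by
    rw [abs_mul, abs_of_pos hδ]
    calc δ * |t| ≤ 1 / 10000 * 2000 := by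
          gcongr
          exact abs_le.2 ⟨h1, h2⟩
      _ = 1 / 5 := by norm_num
  apply opNorm_le_one_of_entries
  · exact (small _ (by linarith) (by linarith)).trans (by norm_num)
  · refine (abs_add_le _ _).trans ?_
    rw [abs_of_pos hη]
    exact (add_le_add (small _ (by linarith) (by linarith)) hη₀).trans (by norm_num)
  · rw [abs_neg]
    exact (small _ (by linarith) (by linarith)).trans (by norm_num)
  · exact (small _ (by linarith) (by linarith)).trans (by norm_num)
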